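/- Let T ∈ SVRPP^n(λ/μ). Then T is a highest weight element (that is, e_i(T) = 0 for all i ∈ {1,...,n−1}) if and only if the reading word read(T) is a reverse lattice word. -/

import Mathlib

open scoped Classical

/-- A partition, given as its weakly decreasing sequence of parts (0-indexed),
with finitely many nonzero parts. -/
def IsPartitionFun (f : ℕ → ℕ) : Prop :=
  (∀ i, f (i + 1) ≤ f i) ∧ ∃ N, ∀ i, N ≤ i → f i = 0

/-- Box `(i, j)` (row `i`, column `j`, both 0-indexed) lies in the skew shape `lam/mu`. -/
def InShape (lam mu : ℕ → ℕ) (i j : ℕ) : Prop :=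
  mu i ≤ j ∧ j < lam i

/-- `A ≤ B` for finite sets of naturals: every element of `A` is at most every
element of `B` (for nonempty sets this says `max A ≤ min B`). -/
def FinsetLE (A B : Finset ℕ) : Prop :=
  ∀ a ∈ A, ∀ b ∈ B, a ≤ b

/-- A set-valued reverse plane partition of skew shape `lam/mu`: every box of the
shape is filled with a nonempty finite set of positive integers, the sets weakly
increase along rows and down columns, and boxes outside the shape are empty. -/
def IsSVRPP (lam mu : ℕ → ℕ) (T : ℕ → ℕ → Finset ℕ) : Prop :=
  (∀ i j, ¬ InShape lam mu i j → T i j = ∅) ∧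
  (∀ i j, InShape lam mu i j → (T i j).Nonempty) ∧
  (∀ i j x, x ∈ T i j → 1 ≤ x) ∧
  (∀ i j, InShape lam mu i j → InShape lam mu i (j + 1) → FinsetLE (T i j) (T i (j + 1))) ∧
  (∀ i j, InShape lam mu i j → InShape lam mu (i + 1) j → FinsetLE (T i j) (T (i + 1) j))

/-- An SVRPP all of whose entries are subsets of `{1, …, n}`. -/
def IsSVRPPn (lam mu : ℕ → ℕ) (n : ℕ) (T : ℕ → ℕ → Finset ℕ) : Prop :=
  IsSVRPP lam mu T ∧ ∀ i j, T i j ⊆ Finset.Icc 1 n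

/-- `ircont T v` = number of columns of `T` containing a set that contains `v`. -/
noncomputable def ircont (T : ℕ → ℕ → Finset ℕ) (v : ℕ) : ℕ :=
  Set.ncard {j : ℕ | ∃ i, v ∈ T i j}

/-- `ceq lam mu T i` = number of boxes `(i,j)` of the shape with `(i+1,j)` also in the
shape and `max T(i,j) = min T(i+1,j)`. -/
noncomputable def ceq (lam mu : ℕ → ℕ) (T : ℕ → ℕ → Finset ℕ) (i : ℕ) : ℕ :=
  Set.ncard {j : ℕ | InShape lam mu i j ∧ InShape lam mu (i + 1) j ∧
    ∃ m, m ∈ T i j ∧ (∀ x ∈ T i j, x ≤ m) ∧ m ∈ T (i + 1) j ∧ ∀ x ∈ T (i + 1) j, m ≤ x}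

/-- `exv lam mu T i` = excess of row `i`: the sum over the boxes of row `i` of
(cardinality of the filling minus one). -/
def exv (lam mu : ℕ → ℕ) (T : ℕ → ℕ → Finset ℕ) (i : ℕ) : ℕ :=
  ∑ j ∈ Finset.Ico (mu i) (lam i), ((T i j).card - 1)

/-! ### Two-letter fillings (letters `a` and `a+1`) and descent resolution -/

/-- Column `j` of the filling `S` contains the letter `x` somewhere. -/
def ColHas (S : ℕ → ℕ → Finset ℕ) (j x : ℕ) : Prop := ∃ r, x ∈ S r j

/-- Column `j` is `a`-pure: it contains the letter `a` but not the letter `a+1`. -/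
def ColPureA (a : ℕ) (S : ℕ → ℕ → Finset ℕ) (j : ℕ) : Prop :=
  ColHas S j a ∧ ¬ ColHas S j (a + 1)

/-- Column `j` is `(a+1)`-pure: it contains the letter `a+1` but not the letter `a`. -/
def ColPureB (a : ℕ) (S : ℕ → ℕ → Finset ℕ) (j : ℕ) : Prop :=
  ColHas S j (a + 1) ∧ ¬ ColHas S j a

/-- Column `j` is mixed: it contains both letters `a` and `a+1`. -/
def ColMixed (a : ℕ) (S : ℕ → ℕ → Finset ℕ) (j : ℕ) : Prop :=
  ColHas S j a ∧ ColHas S j (a + 1)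

/-- `sep a S j`: the smallest row index `r` with `a+1 ∈ S r j` (the transition row of a
mixed column). -/
noncomputable def sep (a : ℕ) (S : ℕ → ℕ → Finset ℕ) (j : ℕ) : ℕ :=
  sInf {r : ℕ | a + 1 ∈ S r j}

/-- `botA a S j`: the largest row index `r` with `a ∈ S r j` (the bottom-most box of
column `j` containing the letter `a`). -/
noncomputable def botA (a : ℕ) (S : ℕ → ℕ → Finset ℕ) (j : ℕ) : ℕ :=
  sSup {r : ℕ | a ∈ S r j}

/-- `k` is a descent of `S`: in some row, a box whose maximum is `a+1` lies immediately
to the left of a box whose minimum is `a`. -/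
def Descent (a : ℕ) (S : ℕ → ℕ → Finset ℕ) (k : ℕ) : Prop :=
  ∃ r, a + 1 ∈ S r k ∧ a ∈ S r (k + 1)

/-- The flip map: each entry of every `a`-pure column is replaced by `{a+1}`, each entry
of every `(a+1)`-pure column is replaced by `{a}`, and mixed columns stay unchanged. -/
noncomputable def flipT (a : ℕ) (S : ℕ → ℕ → Finset ℕ) : ℕ → ℕ → Finset ℕ :=
  fun r j =>
    if ColPureA a S j then (S r j).image (fun _ => a + 1)
    else if ColPureB a S j then (S r j).image (fun _ => a)
    else S r j

/-- The descent-resolution operation `res_k` at columns `k, k+1`, implementing the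
(M1), (2M) and (21) moves (with `a, a+1` playing the roles of `1, 2`). -/
noncomputable def resFun (a : ℕ) (S : ℕ → ℕ → Finset ℕ) (k : ℕ) : ℕ → ℕ → Finset ℕ :=
  fun r j =>
    if ColMixed a S k ∧ ColPureA a S (k + 1) then
      -- (M1): the transition row is `sep a S k`, the transition entry is `S (sep a S k) k`.
      (if j = k then (S r j).image (fun _ => a)
       else if j = k + 1 then
         (if (S r j).Nonempty then
            (if r < sep a S k then {a}
             else if r = sep a S k then S r k
             else {a + 1})
          else ∅)
       else S r j)
    else if ColPureB a S k ∧ ColMixed a S (k + 1) then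
      -- (2M): the transition row is `botA a S (k+1)`, the transition entry is
      -- `S (botA a S (k+1)) (k+1)`.
      (if j = k then
         (if (S r j).Nonempty then
            (if r < botA a S (k + 1) then {a}
             else if r = botA a S (k + 1) then S r (k + 1)
             else {a + 1})
          else ∅)
       else if j = k + 1 then (S r j).image (fun _ => a + 1)
       else S r j)
    else if ColPureB a S k ∧ ColPureA a S (k + 1) then
      -- (21): the two columns swap purities.
      (if j = k then (S r j).image (fun _ => a)
       else if j = k + 1 then (S r j).image (fun _ => a + 1)
       else S r j)
    else S r j

/-- One descent-resolution step: `ResStep a S S'` holds when `S' = res_k S` for some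
descent `k` of `S`. -/
def ResStep (a : ℕ) (S S' : ℕ → ℕ → Finset ℕ) : Prop :=
  ∃ k, Descent a S k ∧ S' = resFun a S k

/-! ### Crystal operators on set-valued reverse plane partitions -/

/-- The restriction `T^{(i)}` of a filling to the letters `i` and `i+1`: each box keeps
its intersection with `{i, i+1}`. -/
def restrictTwo (i : ℕ) (T : ℕ → ℕ → Finset ℕ) : ℕ → ℕ → Finset ℕ :=
  fun r j => (T r j).filter (fun x => x = i ∨ x = i + 1)

/-- The complement of `T^{(i)}` inside `T`: each box keeps its letters other than
`i` and `i+1`. -/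
def eraseTwo (i : ℕ) (T : ℕ → ℕ → Finset ℕ) : ℕ → ℕ → Finset ℕ :=
  fun r j => (T r j).filter (fun x => ¬ (x = i ∨ x = i + 1))

/-- Recombine a filling `T` with a new `{i, i+1}`-part `S`. -/
def mergeTwo (i : ℕ) (T S : ℕ → ℕ → Finset ℕ) : ℕ → ℕ → Finset ℕ :=
  fun r j => eraseTwo i T r j ∪ S r j

/-- In column `A`, replace every letter `i+1` by `i`. -/
def raiseCol (i A : ℕ) (S : ℕ → ℕ → Finset ℕ) : ℕ → ℕ → Finset ℕ :=
  fun r j => if j = A then (S r j).image (fun x => if x = i + 1 then i else x) else S r j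

/-- In column `A`, replace every letter `i` by `i+1`. -/
def lowerCol (i A : ℕ) (S : ℕ → ℕ → Finset ℕ) : ℕ → ℕ → Finset ℕ :=
  fun r j => if j = A then (S r j).image (fun x => if x = i then i + 1 else x) else S r j

/-- Suffix statistic of the `i`-signature: the number of `(i+1)`-pure columns `≥ p` minus
the number of `i`-pure columns `≥ p` (of `T^{(i)}`). -/
noncomputable def fsuffix (i : ℕ) (T : ℕ → ℕ → Finset ℕ) (p : ℕ) : ℤ :=
  (Set.ncard {j : ℕ | p ≤ j ∧ ColPureB i (restrictTwo i T) j} : ℤ) -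
  (Set.ncard {j : ℕ | p ≤ j ∧ ColPureA i (restrictTwo i T) j} : ℤ)

/-- Prefix statistic of the `i`-signature: the number of `i`-pure columns `≤ p` minus the
number of `(i+1)`-pure columns `≤ p` (of `T^{(i)}`). -/
noncomputable def gprefix (i : ℕ) (T : ℕ → ℕ → Finset ℕ) (p : ℕ) : ℤ :=
  (Set.ncard {j : ℕ | j ≤ p ∧ ColPureA i (restrictTwo i T) j} : ℤ) -
  (Set.ncard {j : ℕ | j ≤ p ∧ ColPureB i (restrictTwo i T) j} : ℤ)

/-- Column `A` carries the leftmost uncancelled `−` of the reduced `i`-signature of `T`: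
it is `(i+1)`-pure and is the largest maximizer of the suffix statistic. -/
def LeftmostUnpairedMinus (i : ℕ) (T : ℕ → ℕ → Finset ℕ) (A : ℕ) : Prop :=
  ColPureB i (restrictTwo i T) A ∧
  (∀ p, fsuffix i T p ≤ fsuffix i T A) ∧
  (∀ p, A < p → fsuffix i T p < fsuffix i T A)

/-- Column `A` carries the rightmost uncancelled `+` of the reduced `i`-signature of `T`:
it is `i`-pure and is the smallest maximizer of the prefix statistic. -/
def RightmostUnpairedPlus (i : ℕ) (T : ℕ → ℕ → Finset ℕ) (A : ℕ) : Prop :=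
  ColPureA i (restrictTwo i T) A ∧
  (∀ p, gprefix i T p ≤ gprefix i T A) ∧
  (∀ p, p < A → gprefix i T p < gprefix i T A)

/-- `ERel i T T'` : `T'` is obtained from `T` by the raising operator `e_i`: change all
`(i+1)`'s to `i`'s in the column of the leftmost uncancelled `−`, run the
descent-resolution algorithm on the `{i, i+1}`-part until no descent remains, and merge
the result back into `T`. -/
def ERel (i : ℕ) (T T' : ℕ → ℕ → Finset ℕ) : Prop :=
  ∃ A S', LeftmostUnpairedMinus i T A ∧
    Relation.ReflTransGen (ResStep i) (raiseCol i A (restrictTwo i T)) S' ∧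
    (∀ k, ¬ Descent i S' k) ∧
    T' = mergeTwo i T S'

/-- `FRel i T T'` : `T'` is obtained from `T` by the lowering operator `f_i`. -/
def FRel (i : ℕ) (T T' : ℕ → ℕ → Finset ℕ) : Prop :=
  ∃ A S', RightmostUnpairedPlus i T A ∧
    Relation.ReflTransGen (ResStep i) (lowerCol i A (restrictTwo i T)) S' ∧
    (∀ k, ¬ Descent i S' k) ∧
    T' = mergeTwo i T S'

/-- The raising crystal operator `e_i` (with value `none` playing the role of `0`). -/
noncomputable def eOp (i : ℕ) (T : ℕ → ℕ → Finset ℕ) : Option (ℕ → ℕ → Finset ℕ) :=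
  if h : ∃ T', ERel i T T' then some h.choose else none

/-- The lowering crystal operator `f_i` (with value `none` playing the role of `0`). -/
noncomputable def fOp (i : ℕ) (T : ℕ → ℕ → Finset ℕ) : Option (ℕ → ℕ → Finset ℕ) :=
  if h : ∃ T', FRel i T T' then some h.choose else none

/-! ### Reading words -/

/-- The contribution of row `r` to the reading word of `T` (columns bounded by `C`; empty
boxes are skipped). First the non-pivot entries are read from right to left, within each
box from largest to smallest; then the pivots (minima of boxes) are read from left to
right, omitting every pivot equal to the maximum entry of the (nonempty) box directly
above it. -/
noncomputable def rowRead (C : ℕ) (T : ℕ → ℕ → Finset ℕ) (r : ℕ) : List ℕ :=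
  (((List.range C).reverse).flatMap
      (fun j => ((T r j).sort (· ≤ ·)).tail.reverse)) ++
  ((List.range C).filterMap
      (fun j =>
        if h : (T r j).Nonempty then
          (if r ≠ 0 ∧ (T r j).min' h ∈ T (r - 1) j ∧
              (∀ x ∈ T (r - 1) j, x ≤ (T r j).min' h)
           then none else some ((T r j).min' h))
        else none))

/-- The reading word of `T`: rows are read from bottom (row `R - 1`) to top (row `0`). -/
noncomputable def readWord (R C : ℕ) (T : ℕ → ℕ → Finset ℕ) : List ℕ :=
  ((List.range R).reverse).flatMap (fun r => rowRead C T r)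

/-- The height vector of `T`: the sequence of (0-indexed) row indices of the letters of
the reading word. -/
noncomputable def heightWord (R C : ℕ) (T : ℕ → ℕ → Finset ℕ) : List ℕ :=
  ((List.range R).reverse).flatMap (fun r => (rowRead C T r).map (fun _ => r))

/-- A word is a reverse lattice (Yamanouchi) word if every suffix contains at least as
many `a`'s as `b`'s whenever `a < b` (for positive letters). -/
def IsReverseLatticeWord (w : List ℕ) : Prop :=
  ∀ k a b, 1 ≤ a → a < b → (w.drop k).count b ≤ (w.drop k).count a


structure GoodT (R C : ℕ) (T : ℕ → ℕ → Finset ℕ) : Prop where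
  conv : ∀ {r s r' j k j'}, r ≤ s → s ≤ r' → j ≤ k → k ≤ j' →
    (T r j).Nonempty → (T r' j').Nonempty → (T s k).Nonempty
  mono : ∀ {r r' j j' x y}, r ≤ r' → j ≤ j' → (r < r' ∨ j < j') → x ∈ T r j → y ∈ T r' j' → x ≤ y
  bnd : ∀ {r j}, (T r j).Nonempty → r < R ∧ j < C

theorem goodT_of (lam mu : ℕ → ℕ)
    (hlam : IsPartitionFun lam) (hmu : IsPartitionFun mu)
    (R C : ℕ) (hR : ∀ r, R ≤ r → lam r = 0) (hC : ∀ r, lam r ≤ C)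
    (T : ℕ → ℕ → Finset ℕ) (hT : IsSVRPP lam mu T) : GoodT R C T := by
  obtain ⟨h1, h2, h3, h4, h5⟩ := hT
  have hl : Antitone lam := antitone_nat_of_succ_le hlam.1
  have hm : Antitone mu := antitone_nat_of_succ_le hmu.1
  have hne : ∀ r j, (T r j).Nonempty ↔ InShape lam mu r j := by
    intro r j
    refine ⟨fun h => ?_, h2 r j⟩
    by_contra hc
    rw [h1 r j hc] at h
    exact Finset.not_nonempty_empty h
  have conv : ∀ {r s r' j k j'}, r ≤ s → s ≤ r' → j ≤ k → k ≤ j' →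
    (T r j).Nonempty → (T r' j').Nonempty → (T s k).Nonempty := by
    intro r s r' j k j' a b c d
    simp only [hne, InShape]
    have := hl b
    have := hm a
    omega
  have row : ∀ r j d x y, x ∈ T r j → y ∈ T r (j + d + 1) → x ≤ y := by
    intro r j d
    induction d with
    | zero =>
      intro x y hx hy
      exact h4 r j ((hne _ _).1 ⟨x, hx⟩) ((hne _ _).1 ⟨y, hy⟩) x hx y hy
    | succ d ih =>
      intro x y hx hy
      obtain ⟨z, hz⟩ := conv (s := r) (k := j + d + 1) le_rfl le_rfl (by omega) (by omega) ⟨x, hx⟩ ⟨y, hy⟩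
      exact (ih x z hx hz).trans
        (h4 r _ ((hne _ _).1 ⟨z, hz⟩) ((hne _ _).1 ⟨y, hy⟩) z hz y hy)
  have col : ∀ r j d x y, x ∈ T r j → y ∈ T (r + d + 1) j → x ≤ y := by
    intro r j d
    induction d with
    | zero =>
      intro x y hx hy
      exact h5 r j ((hne _ _).1 ⟨x, hx⟩) ((hne _ _).1 ⟨y, hy⟩) x hx y hy
    | succ d ih =>
      intro x y hx hy
      obtain ⟨z, hz⟩ := conv (s := r + d + 1) (k := j) (by omega) (by omega) le_rfl le_rfl ⟨x, hx⟩ ⟨y, hy⟩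
      exact (ih x z hx hz).trans
        (h5 _ _ ((hne _ _).1 ⟨z, hz⟩) ((hne _ _).1 ⟨y, hy⟩) z hz y hy)
  refine ⟨conv, ?_, ?_⟩
  · intro r r' j j' x y hr hj hlt hx hy
    rcases hr.eq_or_lt with rfl | hr'
    · obtain ⟨d, rfl⟩ := Nat.exists_eq_add_of_lt (show j < j' by omega)
      exact row _ _ _ _ _ hx hy
    · obtain ⟨e, rfl⟩ := Nat.exists_eq_add_of_lt hr'
      rcases hj.eq_or_lt with rfl | hj'
      · exact col _ _ _ _ _ hx hy
      · obtain ⟨d, rfl⟩ := Nat.exists_eq_add_of_lt hj'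
        obtain ⟨z, hz⟩ := conv (s := r) (k := j + d + 1) (by omega) (by omega) (by omega) (by omega) ⟨x, hx⟩ ⟨y, hy⟩
        exact (row _ _ _ _ _ hx hz).trans (col _ _ _ _ _ hz hy)
  · intro r j h
    rw [hne, InShape] at h
    have := hC r
    refine ⟨?_, by omega⟩
    by_contra hc
    have := hR r (by omega)
    omega

/-! descent resolution terminates -/

structure ResInv (a R C : ℕ) (S : ℕ → ℕ → Finset ℕ) : Prop where
  conv : ∀ {r s r' j k j'}, r ≤ s → s ≤ r' → j ≤ k → k ≤ j' →
    (S r j).Nonempty → (S r' j').Nonempty → (S s k).Nonempty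
  bnd : ∀ {r j}, (S r j).Nonempty → r < R ∧ j < C
  two : ∀ {r j x}, x ∈ S r j → x = a ∨ x = a + 1
  col : ∀ {r r' j}, a + 1 ∈ S r j → a ∈ S r' j → r' ≤ r
  mix : ∀ {r j j'}, ColMixed a S j → ColMixed a S j' → j < j' → a + 1 ∈ S r j → a ∈ S r j' → False

noncomputable def valc (a : ℕ) (S : ℕ → ℕ → Finset ℕ) (j : ℕ) : ℕ :=
  if ColHas S j (a + 1) then (if ColHas S j a then 1 else 2) else 0

noncomputable def meas (a C : ℕ) (S : ℕ → ℕ → Finset ℕ) : ℕ :=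
  ∑ j ∈ Finset.range C, (C - j) * valc a S j

theorem meas_lt (a C : ℕ) (S S' : ℕ → ℕ → Finset ℕ) (k : ℕ) (hk : k + 1 < C)
    (h : ∀ j, j ≠ k → j ≠ k + 1 → valc a S' j = valc a S j)
    (hlt : valc a S' k < valc a S k)
    (hsum : valc a S' k + valc a S' (k + 1) ≤ valc a S k + valc a S (k + 1)) :
    meas a C S' < meas a C S := by
  unfold meas
  have h1 : k ∈ Finset.range C := by simp; omega
  have h2 : k + 1 ∈ (Finset.range C).erase k := by simp; omega
  rw [← Finset.add_sum_erase _ _ h1, ← Finset.add_sum_erase _ _ h2,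
    ← Finset.add_sum_erase _ (fun j => (C - j) * valc a S j) h1,
    ← Finset.add_sum_erase _ (fun j => (C - j) * valc a S j) h2]
  have h3 : ∑ j ∈ ((Finset.range C).erase k).erase (k + 1), (C - j) * valc a S' j
      = ∑ j ∈ ((Finset.range C).erase k).erase (k + 1), (C - j) * valc a S j := by
    apply Finset.sum_congr rfl
    intro j hj
    simp at hj
    rw [h j hj.2.1 hj.1]
  rw [h3]
  obtain ⟨e, rfl⟩ : ∃ e, C = k + 2 + e := ⟨C - (k + 2), by omega⟩
  have e1 : k + 2 + e - k = e + 2 := by omega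
  have e2 : k + 2 + e - (k + 1) = e + 1 := by omega
  simp only [e1, e2]
  nlinarith

theorem valc_congr (a : ℕ) (S S' : ℕ → ℕ → Finset ℕ) (j : ℕ) (h : ∀ r, S' r j = S r j) :
    valc a S' j = valc a S j := by
  have e : ∀ x, ColHas S' j x ↔ ColHas S j x := fun x => by simp only [ColHas, h]
  unfold valc
  by_cases c1 : ColHas S j (a + 1) <;> by_cases c2 : ColHas S j a <;> simp [e, c1, c2]

theorem mixed_congr (a : ℕ) (S S' : ℕ → ℕ → Finset ℕ) (j : ℕ) (h : ∀ r, S' r j = S r j) :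
    ColMixed a S' j ↔ ColMixed a S j := by
  simp only [ColMixed, ColHas, h]

theorem inv_of {a R C : ℕ} {S S' : ℕ → ℕ → Finset ℕ} (hS : ResInv a R C S)
    (hsupp : ∀ r j, (S' r j).Nonempty ↔ (S r j).Nonempty)
    (two : ∀ {r j x}, x ∈ S' r j → x = a ∨ x = a + 1)
    (col : ∀ {r r' j}, a + 1 ∈ S' r j → a ∈ S' r' j → r' ≤ r)
    (mix : ∀ {r j j'}, ColMixed a S' j → ColMixed a S' j' → j < j' → a + 1 ∈ S' r j →
      a ∈ S' r j' → False) : ResInv a R C S' := by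
  refine ⟨?_, ?_, two, col, mix⟩
  · intro r s r' j k j' h1 h2 h3 h4
    simp only [hsupp]
    exact hS.conv h1 h2 h3 h4
  · intro r j
    simp only [hsupp]
    exact hS.bnd

theorem step_21 {a R C : ℕ} {S S' : ℕ → ℕ → Finset ℕ} {k : ℕ} (hS : ResInv a R C S)
    (hB : ColPureB a S k) (hA : ColPureA a S (k + 1))
    (h0 : ∀ r j, j ≠ k → j ≠ k + 1 → S' r j = S r j)
    (h1 : ∀ r, S' r k = (S r k).image (fun _ => a))
    (h2 : ∀ r, S' r (k + 1) = (S r (k + 1)).image (fun _ => a + 1)) :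
    ResInv a R C S' ∧ meas a C S' < meas a C S := by
  have m1 : ¬ ColMixed a S' k := by
    rintro ⟨-, r, hr⟩; rw [h1] at hr; simp at hr
  have m2 : ¬ ColMixed a S' (k + 1) := by
    rintro ⟨⟨r, hr⟩, -⟩; rw [h2] at hr; simp at hr
  constructor
  · apply inv_of hS
    · intro r j
      by_cases hj : j = k
      · subst hj; rw [h1]; simp
      by_cases hj' : j = k + 1
      · subst hj'; rw [h2]; simp
      rw [h0 _ _ hj hj']
    · intro r j x hx
      by_cases hj : j = k
      · subst hj; rw [h1] at hx; simp at hx; exact Or.inl hx.2.symm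
      by_cases hj' : j = k + 1
      · subst hj'; rw [h2] at hx; simp at hx; exact Or.inr hx.2.symm
      rw [h0 _ _ hj hj'] at hx
      exact hS.two hx
    · intro r r' j hx hy
      by_cases hj : j = k
      · subst hj; rw [h1] at hx; simp at hx
      by_cases hj' : j = k + 1
      · subst hj'; rw [h2] at hy; simp at hy
      rw [h0 _ _ hj hj'] at hx hy
      exact hS.col hx hy
    · intro r j j' hm hm' hjj hx hy
      have a1 : j ≠ k := by rintro rfl; exact m1 hm
      have a2 : j ≠ k + 1 := by rintro rfl; exact m2 hm
      have a3 : j' ≠ k := by rintro rfl; exact m1 hm'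
      have a4 : j' ≠ k + 1 := by rintro rfl; exact m2 hm'
      rw [h0 _ _ a1 a2] at hx
      rw [h0 _ _ a3 a4] at hy
      rw [mixed_congr a S S' j (fun r => h0 r j a1 a2)] at hm
      rw [mixed_congr a S S' j' (fun r => h0 r j' a3 a4)] at hm'
      exact hS.mix hm hm' hjj hx hy
  · obtain ⟨r, hr⟩ := hA.1
    have v1 : valc a S k = 2 := by simp [valc, hB.1, hB.2]
    have v2 : valc a S' k = 0 := by
      have : ¬ ColHas S' k (a + 1) := by
        rintro ⟨r, hr⟩; rw [h1] at hr; simp at hr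
      simp [valc, this]
    have v3 : valc a S' (k + 1) ≤ 2 := by unfold valc; split_ifs <;> simp
    apply meas_lt a C S S' k (hS.bnd ⟨_, hr⟩).2
    · intro j a1 a2
      exact valc_congr _ _ _ _ (fun r => h0 r j a1 a2)
    · omega
    · omega

theorem step_M1 {a R C : ℕ} {S S' : ℕ → ℕ → Finset ℕ} {k s : ℕ} (hS : ResInv a R C S)
    (hM : ColMixed a S k) (hA : ColPureA a S (k + 1)) (hd : Descent a S k)
    (hs : a + 1 ∈ S s k) (hs' : ∀ r, a + 1 ∈ S r k → s ≤ r)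
    (h0 : ∀ r j, j ≠ k → j ≠ k + 1 → S' r j = S r j)
    (h1 : ∀ r, S' r k = (S r k).image (fun _ => a))
    (h2 : ∀ r, S' r (k + 1) = if (S r (k + 1)).Nonempty then
            (if r < s then {a} else if r = s then S r k else {a + 1}) else ∅) :
    ResInv a R C S' ∧ meas a C S' < meas a C S := by
  have m1 : ¬ ColMixed a S' k := by
    rintro ⟨-, r, hr⟩; rw [h1] at hr; simp at hr
  have b1 : ∀ r, a + 1 ∈ S' r (k + 1) → (S r (k + 1)).Nonempty ∧ s ≤ r := by
    intro r hr
    rw [h2] at hr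
    split_ifs at hr with c1 c2 c3 <;> first | (simp at hr; done) | exact ⟨c1, by omega⟩
  have b2 : ∀ r, a ∈ S' r (k + 1) → (S r (k + 1)).Nonempty ∧ (r < s ∨ (r = s ∧ a ∈ S s k)) := by
    intro r hr
    rw [h2] at hr
    split_ifs at hr with c1 c2 c3
    · exact ⟨c1, Or.inl c2⟩
    · subst c3; exact ⟨c1, Or.inr ⟨rfl, hr⟩⟩
    · simp at hr
    · simp at hr
  constructor
  · apply inv_of hS
    · intro r j
      by_cases hj : j = k
      · subst hj; rw [h1]; simp
      by_cases hj' : j = k + 1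
      · subst hj'; rw [h2]
        split_ifs with c1 c2 c3
        · simp [c1]
        · subst c3; simp [c1]; exact ⟨_, hs⟩
        · simp [c1]
        · simpa using c1
      rw [h0 _ _ hj hj']
    · intro r j x hx
      by_cases hj : j = k
      · subst hj; rw [h1] at hx; simp at hx; exact Or.inl hx.2.symm
      by_cases hj' : j = k + 1
      · subst hj'; rw [h2] at hx
        split_ifs at hx with c1 c2 c3
        · simp at hx; exact Or.inl hx
        · exact hS.two hx
        · simp at hx; exact Or.inr hx
        · simp at hx
      rw [h0 _ _ hj hj'] at hx
      exact hS.two hx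
    · intro r r' j hx hy
      by_cases hj : j = k
      · subst hj; rw [h1] at hx; simp at hx
      by_cases hj' : j = k + 1
      · subst hj'
        have := (b1 _ hx).2
        have := (b2 _ hy).2
        omega
      rw [h0 _ _ hj hj'] at hx hy
      exact hS.col hx hy
    · intro r j j' hm hm' hjj hx hy
      have a1 : j ≠ k := by rintro rfl; exact m1 hm
      have a3 : j' ≠ k := by rintro rfl; exact m1 hm'
      by_cases a2 : j = k + 1
      · subst a2
        have a4 : j' ≠ k + 1 := by omega
        rw [mixed_congr a S S' j' (fun r => h0 r j' a3 a4)] at hm'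
        rw [h0 _ _ a3 a4] at hy
        obtain ⟨c1, c2⟩ := b1 _ hx
        rcases c2.eq_or_lt with rfl | c2
        · exact hS.mix hM hm' (by omega) hs hy
        · obtain ⟨z, hz⟩ := hS.conv (s := s) (k := j') le_rfl c2.le (show k ≤ j' by omega) le_rfl ⟨_, hs⟩ ⟨_, hy⟩
          rcases hS.two hz with rfl | rfl
          · exact hS.mix hM hm' (by omega) hs hz
          · have := hS.col hz hy
            omega
      · rw [mixed_congr a S S' j (fun r => h0 r j a1 a2)] at hm
        rw [h0 _ _ a1 a2] at hx
        by_cases a4 : j' = k + 1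
        · subst a4
          obtain ⟨c1, c2⟩ := b2 _ hy
          rcases c2 with c2 | ⟨rfl, c2⟩
          · obtain ⟨z, hz⟩ := hS.conv (s := r) (k := k) le_rfl le_rfl (show j ≤ k by omega) (by omega) ⟨_, hx⟩ c1
            rcases hS.two hz with rfl | rfl
            · exact hS.mix hm hM (by omega) hx hz
            · have := hs' _ hz
              omega
          · exact hS.mix hm hM (by omega) hx c2
        · rw [h0 _ _ a3 a4] at hy
          rw [mixed_congr a S S' j' (fun r => h0 r j' a3 a4)] at hm'
          exact hS.mix hm hm' hjj hx hy
  · obtain ⟨r0, hr0, hr0'⟩ := hd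
    have hbn := (hS.bnd ⟨_, hr0'⟩).2
    have v1 : valc a S k = 1 := by simp [valc, hM.1, hM.2]
    have v2 : valc a S' k = 0 := by
      have : ¬ ColHas S' k (a + 1) := by
        rintro ⟨r, hr⟩; rw [h1] at hr; simp at hr
      simp [valc, this]
    have v3 : valc a S' (k + 1) ≤ 1 := by
      have : ColHas S' (k + 1) a := by
        obtain ⟨r1, hr1⟩ := hM.1
        have q1 := hS.col hs hr1
        have q2 := hs' _ hr0
        have q3 := hS.conv (s := r1) (k := k + 1) le_rfl (q1.trans q2) (by omega) le_rfl ⟨_, hr1⟩ ⟨_, hr0'⟩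
        refine ⟨r1, ?_⟩
        rw [h2, if_pos q3]
        split_ifs with c1 c2
        · simp
        · exact hr1
        · omega
      unfold valc; split_ifs <;> simp
    apply meas_lt a C S S' k hbn
    · intro j a1 a2
      exact valc_congr _ _ _ _ (fun r => h0 r j a1 a2)
    · omega
    · omega

theorem step_2M {a R C : ℕ} {S S' : ℕ → ℕ → Finset ℕ} {k b : ℕ} (hS : ResInv a R C S)
    (hB : ColPureB a S k) (hM : ColMixed a S (k + 1)) (hd : Descent a S k)
    (hb : a ∈ S b (k + 1)) (hb' : ∀ r, a ∈ S r (k + 1) → r ≤ b)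
    (h0 : ∀ r j, j ≠ k → j ≠ k + 1 → S' r j = S r j)
    (h2 : ∀ r, S' r (k + 1) = (S r (k + 1)).image (fun _ => a + 1))
    (h1 : ∀ r, S' r k = if (S r k).Nonempty then
            (if r < b then {a} else if r = b then S r (k + 1) else {a + 1}) else ∅) :
    ResInv a R C S' ∧ meas a C S' < meas a C S := by
  have m1 : ¬ ColMixed a S' (k + 1) := by
    rintro ⟨⟨r, hr⟩, -⟩; rw [h2] at hr; simp at hr
  have b1 : ∀ r, a + 1 ∈ S' r k → (S r k).Nonempty ∧ (b < r ∨ (r = b ∧ a + 1 ∈ S b (k + 1))) := by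
    intro r hr
    rw [h1] at hr
    split_ifs at hr with c1 c2 c3
    · simp at hr
    · subst c3; exact ⟨c1, Or.inr ⟨rfl, hr⟩⟩
    · exact ⟨c1, Or.inl (by omega)⟩
    · simp at hr
  have b2 : ∀ r, a ∈ S' r k → (S r k).Nonempty ∧ r ≤ b := by
    intro r hr
    rw [h1] at hr
    split_ifs at hr with c1 c2 c3
    · exact ⟨c1, by omega⟩
    · exact ⟨c1, by omega⟩
    · simp at hr
    · simp at hr
  constructor
  · apply inv_of hS
    · intro r j
      by_cases hj : j = k
      · subst hj; rw [h1]
        split_ifs with c1 c2 c3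
        · simp [c1]
        · subst c3; simp [c1]; exact ⟨_, hb⟩
        · simp [c1]
        · simpa using c1
      by_cases hj' : j = k + 1
      · subst hj'; rw [h2]; simp
      rw [h0 _ _ hj hj']
    · intro r j x hx
      by_cases hj : j = k
      · subst hj; rw [h1] at hx
        split_ifs at hx with c1 c2 c3
        · simp at hx; exact Or.inl hx
        · exact hS.two hx
        · simp at hx; exact Or.inr hx
        · simp at hx
      by_cases hj' : j = k + 1
      · subst hj'; rw [h2] at hx; simp at hx; exact Or.inr hx.2.symm
      rw [h0 _ _ hj hj'] at hx
      exact hS.two hx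
    · intro r r' j hx hy
      by_cases hj : j = k
      · subst hj
        have := (b1 _ hx).2
        have := (b2 _ hy).2
        omega
      by_cases hj' : j = k + 1
      · subst hj'; rw [h2] at hy; simp at hy
      rw [h0 _ _ hj hj'] at hx hy
      exact hS.col hx hy
    · intro r j j' hm hm' hjj hx hy
      have a2 : j ≠ k + 1 := by rintro rfl; exact m1 hm
      have a4 : j' ≠ k + 1 := by rintro rfl; exact m1 hm'
      by_cases a1 : j = k
      · subst a1
        have a3 : j' ≠ j := by omega
        rw [mixed_congr a S S' j' (fun r => h0 r j' a3 a4)] at hm'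
        rw [h0 _ _ a3 a4] at hy
        obtain ⟨c1, c2⟩ := b1 _ hx
        rcases c2 with c2 | ⟨rfl, c2⟩
        · obtain ⟨z, hz⟩ := hS.conv (s := r) (k := j + 1) le_rfl le_rfl (by omega) (by omega) c1 ⟨_, hy⟩
          rcases hS.two hz with rfl | rfl
          · have := hb' _ hz
            omega
          · exact hS.mix hM hm' (by omega) hz hy
        · exact hS.mix hM hm' (by omega) c2 hy
      · rw [mixed_congr a S S' j (fun r => h0 r j a1 a2)] at hm
        rw [h0 _ _ a1 a2] at hx
        by_cases a3 : j' = k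
        · subst a3
          obtain ⟨c1, c2⟩ := b2 _ hy
          rcases c2.eq_or_lt with rfl | c2
          · exact hS.mix hm hM (by omega) hx hb
          · obtain ⟨z, hz⟩ := hS.conv (s := r) (k := j' + 1) le_rfl c2.le (by omega) le_rfl c1 ⟨_, hb⟩
            rcases hS.two hz with rfl | rfl
            · exact hS.mix hm hM (by omega) hx hz
            · have := hS.col hz hb
              omega
        · rw [h0 _ _ a3 a4] at hy
          rw [mixed_congr a S S' j' (fun r => h0 r j' a3 a4)] at hm'
          exact hS.mix hm hm' hjj hx hy
  · obtain ⟨r0, hr0, hr0'⟩ := hd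
    have hbn := (hS.bnd ⟨_, hr0'⟩).2
    have v1 : valc a S k = 2 := by simp [valc, hB.1, hB.2]
    have v0 : valc a S (k + 1) = 1 := by simp [valc, hM.1, hM.2]
    have v2 : valc a S' k ≤ 1 := by
      have : ColHas S' k a := by
        refine ⟨r0, ?_⟩
        have q2 := hb' _ hr0'
        rw [h1, if_pos ⟨_, hr0⟩]
        split_ifs with c1 c2
        · simp
        · exact hr0'
        · omega
      unfold valc; split_ifs <;> simp
    have v3 : valc a S' (k + 1) ≤ 2 := by
      unfold valc; split_ifs <;> simp
    apply meas_lt a C S S' k hbn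
    · intro j a1 a2
      exact valc_congr _ _ _ _ (fun r => h0 r j a1 a2)
    · omega
    · omega

theorem step_all {a R C : ℕ} {S : ℕ → ℕ → Finset ℕ} {k : ℕ} (hS : ResInv a R C S)
    (hd : Descent a S k) :
    ResInv a R C (resFun a S k) ∧ meas a C (resFun a S k) < meas a C S := by
  obtain ⟨r0, h1, h2⟩ := hd
  have hk : ColHas S k (a + 1) := ⟨r0, h1⟩
  have hk' : ColHas S (k + 1) a := ⟨r0, h2⟩
  have hkk : k + 1 ≠ k := by omega
  by_cases c1 : ColHas S k a
  · have hM : ColMixed a S k := ⟨c1, hk⟩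
    have hA : ColPureA a S (k + 1) :=
      ⟨hk', fun h => hS.mix hM ⟨hk', h⟩ (by omega) h1 h2⟩
    apply step_M1 (s := sep a S k) hS hM hA ⟨r0, h1, h2⟩
    · exact Nat.sInf_mem (s := {r : ℕ | a + 1 ∈ S r k}) hk
    · intro r hr
      exact Nat.sInf_le hr
    · intro r j q1 q2
      simp [resFun, hM, hA, q1, q2]
    · intro r
      simp [resFun, hM, hA]
    · intro r
      simp [resFun, hM, hA]
  · have hB : ColPureB a S k := ⟨hk, c1⟩
    have nM : ¬ ColMixed a S k := fun h => c1 h.1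
    by_cases c2 : ColHas S (k + 1) (a + 1)
    · have hM : ColMixed a S (k + 1) := ⟨hk', c2⟩
      have bd : BddAbove {r : ℕ | a ∈ S r (k + 1)} := ⟨R, fun r hr => (hS.bnd ⟨_, hr⟩).1.le⟩
      apply step_2M (b := botA a S (k + 1)) hS hB hM ⟨r0, h1, h2⟩
      · exact Nat.sSup_mem (s := {r : ℕ | a ∈ S r (k + 1)}) hk' bd
      · intro r hr
        exact le_csSup bd hr
      · intro r j q1 q2
        simp [resFun, hM, hB, nM, q1, q2]
      · intro r
        simp [resFun, hM, hB, nM]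
      · intro r
        simp [resFun, hM, hB, nM]
    · have hA : ColPureA a S (k + 1) := ⟨hk', c2⟩
      have nM' : ¬ ColMixed a S (k + 1) := fun h => c2 h.2
      apply step_21 (k := k) hS hB hA
      · intro r j q1 q2
        simp [resFun, hA, hB, nM, nM', q1, q2]
      · intro r
        simp [resFun, hA, hB, nM, nM']
      · intro r
        simp [resFun, hA, hB, nM, nM']

theorem exists_resolution (a R C : ℕ) (m : ℕ) : ∀ (S : ℕ → ℕ → Finset ℕ), ResInv a R C S →
    meas a C S = m →
    ∃ S', Relation.ReflTransGen (ResStep a) S S' ∧ ∀ k, ¬ Descent a S' k := by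
  induction m using Nat.strong_induction_on with
  | _ m ih =>
    intro S hS hm
    by_cases h : ∃ k, Descent a S k
    · obtain ⟨k, hk⟩ := h
      obtain ⟨h1, h2⟩ := step_all hS hk
      obtain ⟨S', p, q⟩ := ih _ (hm ▸ h2) _ h1 rfl
      exact ⟨S', Relation.ReflTransGen.head ⟨k, hk, rfl⟩ p, q⟩
    · push Not at h
      exact ⟨S, Relation.ReflTransGen.refl, h⟩

theorem mem_restrictTwo {i : ℕ} {T : ℕ → ℕ → Finset ℕ} {r j x : ℕ} :
    x ∈ restrictTwo i T r j ↔ x ∈ T r j ∧ (x = i ∨ x = i + 1) := by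
  simp [restrictTwo]

theorem colHas_restrict_a {i : ℕ} {T : ℕ → ℕ → Finset ℕ} {j : ℕ} :
    ColHas (restrictTwo i T) j i ↔ ∃ r, i ∈ T r j := by
  simp [ColHas, restrictTwo]

theorem colHas_restrict_b {i : ℕ} {T : ℕ → ℕ → Finset ℕ} {j : ℕ} :
    ColHas (restrictTwo i T) j (i + 1) ↔ ∃ r, i + 1 ∈ T r j := by
  simp [ColHas, restrictTwo]

theorem inv_raise {R C i A : ℕ} {T : ℕ → ℕ → Finset ℕ} (hT : GoodT R C T)
    (hA : ColPureB i (restrictTwo i T) A) : ResInv i R C (raiseCol i A (restrictTwo i T)) := by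
  have hmem : ∀ r j x, x ∈ raiseCol i A (restrictTwo i T) r j →
      (j = A ∧ x = i ∧ i + 1 ∈ T r j) ∨ (j ≠ A ∧ x ∈ T r j ∧ (x = i ∨ x = i + 1)) := by
    intro r j x hx
    by_cases hj : j = A
    · subst hj
      simp only [raiseCol, if_true, Finset.mem_image, mem_restrictTwo] at hx
      obtain ⟨y, ⟨hy, hy'⟩, rfl⟩ := hx
      left
      rcases hy' with rfl | rfl
      · exact absurd (colHas_restrict_a.2 ⟨_, hy⟩) hA.2
      · simp [hy]
    · right
      simp only [raiseCol, if_neg hj, mem_restrictTwo] at hx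
      exact ⟨hj, hx⟩
  have hne : ∀ r j, (raiseCol i A (restrictTwo i T) r j).Nonempty ↔ (restrictTwo i T r j).Nonempty := by
    intro r j
    unfold raiseCol
    split_ifs <;> simp
  have nm : ¬ ColMixed i (raiseCol i A (restrictTwo i T)) A := by
    rintro ⟨-, r, hr⟩
    rcases hmem _ _ _ hr with h | h
    · omega
    · exact h.1 rfl
  refine ⟨?_, ?_, ?_, ?_, ?_⟩
  · intro r s r' j k j' q1 q2 q3 q4
    simp only [hne]
    rintro ⟨x, hx⟩ ⟨y, hy⟩
    by_cases e1 : r = s ∧ j = k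
    · rw [← e1.1, ← e1.2]; exact ⟨x, hx⟩
    by_cases e2 : r' = s ∧ j' = k
    · rw [← e2.1, ← e2.2]; exact ⟨y, hy⟩
    rw [mem_restrictTwo] at hx hy
    obtain ⟨z, hz⟩ := hT.conv q1 q2 q3 q4 ⟨x, hx.1⟩ ⟨y, hy.1⟩
    have := hT.mono q1 q3 (by omega) hx.1 hz
    have := hT.mono q2 q4 (by omega) hz hy.1
    exact ⟨z, mem_restrictTwo.2 ⟨hz, by omega⟩⟩
  · intro r j
    rw [hne]
    rintro ⟨x, hx⟩
    exact hT.bnd ⟨x, (mem_restrictTwo.1 hx).1⟩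
  · intro r j x hx
    rcases hmem _ _ _ hx with h | h
    · exact Or.inl h.2.1
    · exact h.2.2
  · intro r r' j hx hy
    rcases hmem _ _ _ hx with h | h
    · omega
    rcases hmem _ _ _ hy with h' | h'
    · exact absurd h'.1 h.1
    by_contra hc
    have := hT.mono (show r ≤ r' by omega) le_rfl (by omega) h.2.1 h'.2.1
    omega
  · intro r j j' hm hm' hjj hx hy
    rcases hmem _ _ _ hx with h | h
    · omega
    rcases hmem _ _ _ hy with h' | h'
    · rw [h'.1] at hm'; exact nm hm'
    have := hT.mono le_rfl hjj.le (by omega) h.2.1 h'.2.1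
    omega

theorem eOp_none_iff {R C i : ℕ} {T : ℕ → ℕ → Finset ℕ} (hT : GoodT R C T) :
    eOp i T = none ↔ ¬ ∃ A, LeftmostUnpairedMinus i T A := by
  have : eOp i T = none ↔ ¬ ∃ T', ERel i T T' := by
    unfold eOp
    split_ifs with h <;> simp [h]
  rw [this, not_iff_not]
  constructor
  · rintro ⟨T', A, S', h, -⟩
    exact ⟨A, h⟩
  · rintro ⟨A, h⟩
    obtain ⟨S', p, q⟩ := exists_resolution i R C _ _ (inv_raise hT h.1) rfl
    exact ⟨_, A, S', h, p, q, rfl⟩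

/-! labelled reading word -/

def Piv (T : ℕ → ℕ → Finset ℕ) (x : ℕ × ℕ × ℕ) : Prop := ∀ u ∈ T x.2.1 x.2.2, x.1 ≤ u

def Bef (T : ℕ → ℕ → Finset ℕ) (x y : ℕ × ℕ × ℕ) : Prop :=
  y.2.1 < x.2.1 ∨ (x.2.1 = y.2.1 ∧ ((¬ Piv T x ∧ Piv T y) ∨
    (¬ Piv T x ∧ ¬ Piv T y ∧ (y.2.2 < x.2.2 ∨ (y.2.2 = x.2.2 ∧ y.1 < x.1))) ∨
    (Piv T x ∧ Piv T y ∧ x.2.2 < y.2.2)))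

theorem bef_asymm {T : ℕ → ℕ → Finset ℕ} {x y : ℕ × ℕ × ℕ} (h : Bef T x y) : ¬ Bef T y x := by
  unfold Bef at *
  by_cases h1 : Piv T x <;> by_cases h2 : Piv T y <;> simp only [h1, h2, not_true, not_false_iff,
    true_and, false_and, and_true, and_false, or_false, false_or] at * <;> omega

noncomputable def rowLab (C : ℕ) (T : ℕ → ℕ → Finset ℕ) (r : ℕ) : List (ℕ × ℕ × ℕ) :=
  (((List.range C).reverse).flatMap
      (fun j => (((T r j).sort (· ≤ ·)).tail.reverse).map (fun v => (v, r, j)))) ++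
  ((List.range C).filterMap
      (fun j =>
        if h : (T r j).Nonempty then
          (if r ≠ 0 ∧ (T r j).min' h ∈ T (r - 1) j ∧
              (∀ x ∈ T (r - 1) j, x ≤ (T r j).min' h)
           then none else some ((T r j).min' h, r, j))
        else none))

noncomputable def wordLab (R C : ℕ) (T : ℕ → ℕ → Finset ℕ) : List (ℕ × ℕ × ℕ) :=
  ((List.range R).reverse).flatMap (fun r => rowLab C T r)

theorem rowLab_fst (C : ℕ) (T : ℕ → ℕ → Finset ℕ) (r : ℕ) :
    (rowLab C T r).map Prod.fst = rowRead C T r := by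
  unfold rowLab rowRead
  rw [List.map_append, List.map_flatMap, List.map_filterMap]
  congr 1
  · congr 1
    funext j
    simp [List.map_map, Function.comp_def]
  · congr 1
    funext j
    split_ifs <;> rfl

theorem wordLab_fst (R C : ℕ) (T : ℕ → ℕ → Finset ℕ) :
    (wordLab R C T).map Prod.fst = readWord R C T := by
  unfold wordLab readWord
  rw [List.map_flatMap]
  simp only [rowLab_fst]

theorem mem_tail_of_lt {l : List ℕ} (h : l.Pairwise (· < ·)) (v : ℕ) :
    v ∈ l.tail ↔ v ∈ l ∧ ∃ u ∈ l, u < v := by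
  cases l with
  | nil => simp
  | cons a t =>
    rw [List.pairwise_cons] at h
    simp only [List.tail_cons]
    constructor
    · intro hv
      exact ⟨List.mem_cons_of_mem _ hv, a, List.mem_cons_self, h.1 v hv⟩
    · rintro ⟨hv, u, hu, huv⟩
      rcases List.mem_cons.1 hv with rfl | hv
      · rcases List.mem_cons.1 hu with rfl | hu
        · omega
        · have := h.1 u hu
          omega
      · exact hv

theorem mem_sort_tail (s : Finset ℕ) (v : ℕ) :
    v ∈ (s.sort (· ≤ ·)).tail ↔ v ∈ s ∧ ∃ u ∈ s, u < v := by
  rw [mem_tail_of_lt s.sortedLT_sort.pairwise]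
  simp

theorem mem_nonpiv {C : ℕ} {T : ℕ → ℕ → Finset ℕ} {r : ℕ} {x : ℕ × ℕ × ℕ} :
    x ∈ (((List.range C).reverse).flatMap
      (fun j => (((T r j).sort (· ≤ ·)).tail.reverse).map (fun v => (v, r, j)))) ↔
    x.2.1 = r ∧ x.2.2 < C ∧ x.1 ∈ T x.2.1 x.2.2 ∧ ¬ Piv T x := by
  obtain ⟨v, s, j⟩ := x
  simp only [List.mem_flatMap, List.mem_reverse, List.mem_range, List.mem_map, mem_sort_tail, Piv,
    Prod.mk.injEq]
  push Not
  constructor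
  · rintro ⟨j', hj, v', h, rfl, rfl, rfl⟩
    exact ⟨rfl, hj, h⟩
  · rintro ⟨rfl, hj, h⟩
    exact ⟨j, hj, v, h, rfl, rfl, rfl⟩

theorem piv_fun {T : ℕ → ℕ → Finset ℕ} {r j : ℕ} {x : ℕ × ℕ × ℕ} :
    ((if h : (T r j).Nonempty then
          (if r ≠ 0 ∧ (T r j).min' h ∈ T (r - 1) j ∧
              (∀ x ∈ T (r - 1) j, x ≤ (T r j).min' h)
           then none else some ((T r j).min' h, r, j))
        else none) = some x) ↔
    x.2.1 = r ∧ x.2.2 = j ∧ x.1 ∈ T x.2.1 x.2.2 ∧ Piv T x ∧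
      ¬ (r ≠ 0 ∧ x.1 ∈ T (r - 1) j ∧ ∀ u ∈ T (r - 1) j, u ≤ x.1) := by
  obtain ⟨v, s, k⟩ := x
  constructor
  · intro h
    split_ifs at h with h1 h2
    simp only [Option.some.injEq, Prod.mk.injEq] at h
    obtain ⟨rfl, rfl, rfl⟩ := h
    exact ⟨rfl, rfl, Finset.min'_mem _ h1, fun u hu => Finset.min'_le _ _ hu, h2⟩
  · rintro ⟨h1, h2, h3, h4, h5⟩
    dsimp only at h1 h2 h3 h4 h5
    subst h1 h2
    have hne : (T s k).Nonempty := ⟨v, h3⟩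
    have hv : (T s k).min' hne = v := by
      apply le_antisymm (Finset.min'_le _ _ h3)
      exact h4 _ (Finset.min'_mem _ _)
    rw [dif_pos hne, hv, if_neg h5]

theorem bef_pairwise (R C : ℕ) (T : ℕ → ℕ → Finset ℕ) : (wordLab R C T).Pairwise (Bef T) := by
  have hrow : ∀ r x, x ∈ rowLab C T r → x.2.1 = r := by
    intro r x hx
    unfold rowLab at hx
    rw [List.mem_append, mem_nonpiv, List.mem_filterMap] at hx
    rcases hx with h | ⟨j, -, h⟩
    · exact h.1
    · exact (piv_fun.1 h).1
  unfold wordLab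
  rw [List.pairwise_flatMap]
  constructor
  · intro r _
    unfold rowLab
    rw [List.pairwise_append]
    refine ⟨?_, ?_, ?_⟩
    · rw [List.pairwise_flatMap]
      constructor
      · intro j hj
        rw [List.pairwise_map, List.pairwise_reverse]
        have h1 : ((T r j).sort (· ≤ ·)).tail.Pairwise (· < ·) :=
          (T r j).sortedLT_sort.pairwise.tail
        refine h1.imp_of_mem ?_
        intro a b ha hb hab
        rw [mem_sort_tail] at ha hb
        right
        refine ⟨rfl, Or.inr (Or.inl ⟨?_, ?_, Or.inr ⟨rfl, hab⟩⟩)⟩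
        · unfold Piv; push Not; exact hb.2
        · unfold Piv; push Not; exact ha.2
      · rw [List.pairwise_reverse]
        refine List.pairwise_lt_range.imp ?_
        intro a b hab x hx y hy
        simp only [List.mem_map, List.mem_reverse, mem_sort_tail] at hx hy
        obtain ⟨v, hv, rfl⟩ := hx
        obtain ⟨w, hw, rfl⟩ := hy
        right
        refine ⟨rfl, Or.inr (Or.inl ⟨?_, ?_, Or.inl hab⟩)⟩
        · unfold Piv; push Not; exact hv.2
        · unfold Piv; push Not; exact hw.2
    · rw [List.pairwise_filterMap]
      refine List.pairwise_lt_range.imp ?_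
      intro a b hab x hx y hy
      rw [piv_fun] at hx hy
      right
      exact ⟨hx.1.trans hy.1.symm, Or.inr (Or.inr ⟨hx.2.2.2.1, hy.2.2.2.1, by
        rw [hx.2.1, hy.2.1]; exact hab⟩)⟩
    · intro x hx y hy
      rw [mem_nonpiv] at hx
      rw [List.mem_filterMap] at hy
      obtain ⟨j, -, hy⟩ := hy
      rw [piv_fun] at hy
      right
      exact ⟨hx.1.trans hy.1.symm, Or.inl ⟨hx.2.2.2, hy.2.2.2.1⟩⟩
  · rw [List.pairwise_reverse]
    refine List.pairwise_lt_range.imp ?_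
    intro a b hab x hx y hy
    left
    rw [hrow _ _ hx, hrow _ _ hy]
    exact hab

theorem mem_wordLab {R C : ℕ} {T : ℕ → ℕ → Finset ℕ} (hT : GoodT R C T) {v r j : ℕ} :
    (v, r, j) ∈ wordLab R C T ↔ v ∈ T r j ∧ (r = 0 ∨ v ∉ T (r - 1) j) := by
  unfold wordLab rowLab
  simp only [List.mem_flatMap, List.mem_reverse, List.mem_range]
  constructor
  · rintro ⟨r', hr', h⟩
    rw [List.mem_append, mem_nonpiv, List.mem_filterMap] at h
    rcases h with ⟨rfl, h2, h3, h4⟩ | ⟨j', -, h⟩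
    · refine ⟨h3, ?_⟩
      by_contra hc
      push Not at hc
      obtain ⟨c1, c2⟩ := hc
      apply h4
      intro u hu
      exact hT.mono (Nat.sub_le _ _) le_rfl (Or.inl (by omega)) c2 hu
    · obtain ⟨rfl, rfl, h3, h4, h5⟩ := piv_fun.1 h
      refine ⟨h3, ?_⟩
      by_contra hc
      push Not at hc
      exact h5 ⟨hc.1, hc.2, fun u hu =>
        hT.mono (Nat.sub_le _ _) le_rfl (Or.inl (by have := hc.1; dsimp only at *; omega)) hu h3⟩
  · rintro ⟨h1, h2⟩
    obtain ⟨b1, b2⟩ := hT.bnd ⟨v, h1⟩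
    refine ⟨r, b1, ?_⟩
    rw [List.mem_append, mem_nonpiv, List.mem_filterMap]
    by_cases hp : Piv T (v, r, j)
    · right
      refine ⟨j, List.mem_range.2 b2, ?_⟩
      rw [piv_fun]
      refine ⟨rfl, rfl, h1, hp, ?_⟩
      rintro ⟨q1, q2, -⟩
      rcases h2 with h2 | h2
      · exact q1 h2
      · exact h2 q2
    · left
      exact ⟨rfl, b2, h1, hp⟩

theorem top_up {R C : ℕ} {T : ℕ → ℕ → Finset ℕ} (hT : GoodT R C T) {v r r' j : ℕ}
    (h : r < r') (h1 : v ∈ T r j) (h2 : v ∈ T r' j) : v ∈ T (r' - 1) j := by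
  by_cases e : r = r' - 1
  · rw [← e]; exact h1
  · obtain ⟨z, hz⟩ := hT.conv (s := r' - 1) (k := j) (by omega) (Nat.sub_le _ _) le_rfl le_rfl ⟨v, h1⟩ ⟨v, h2⟩
    have := hT.mono (show r ≤ r' - 1 by omega) le_rfl (by omega) h1 hz
    have := hT.mono (show r' - 1 ≤ r' by omega) le_rfl (by omega) hz h2
    have : z = v := by omega
    rw [← this]; exact hz

theorem not_above {R C : ℕ} {T : ℕ → ℕ → Finset ℕ} (hT : GoodT R C T) {v r r' j : ℕ}
    (h : (v, r, j) ∈ wordLab R C T) (h1 : v ∈ T r' j) : r ≤ r' := by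
  rw [mem_wordLab hT] at h
  by_contra hc
  have := top_up hT (show r' < r by omega) h1 h.1
  rcases h.2 with h | h
  · omega
  · exact h this

theorem row_unique {R C : ℕ} {T : ℕ → ℕ → Finset ℕ} (hT : GoodT R C T) {v r r' j : ℕ}
    (h : (v, r, j) ∈ wordLab R C T) (h' : (v, r', j) ∈ wordLab R C T) : r = r' :=
  le_antisymm (not_above hT h ((mem_wordLab hT).1 h').1) (not_above hT h' ((mem_wordLab hT).1 h).1)

theorem exists_top {R C : ℕ} {T : ℕ → ℕ → Finset ℕ} (hT : GoodT R C T) {v j : ℕ}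
    (h : ∃ r, v ∈ T r j) : ∃ r, (v, r, j) ∈ wordLab R C T := by
  refine ⟨Nat.find h, (mem_wordLab hT).2 ⟨Nat.find_spec h, ?_⟩⟩
  by_cases e : Nat.find h = 0
  · exact Or.inl e
  · exact Or.inr (Nat.find_min h (by omega))

noncomputable def colset (v : ℕ) (D : List (ℕ × ℕ × ℕ)) : Finset ℕ :=
  ((D.filter (fun x => x.1 == v)).map (fun x => x.2.2)).toFinset

theorem mem_colset {v j : ℕ} {D : List (ℕ × ℕ × ℕ)} : j ∈ colset v D ↔ ∃ r, (v, r, j) ∈ D := by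
  unfold colset
  simp only [List.mem_toFinset, List.mem_map, List.mem_filter, beq_iff_eq]
  constructor
  · rintro ⟨⟨a, b, c⟩, ⟨h, rfl⟩, rfl⟩
    exact ⟨b, h⟩
  · rintro ⟨r, h⟩
    exact ⟨_, ⟨h, rfl⟩, rfl⟩

theorem bef_irrefl {T : ℕ → ℕ → Finset ℕ} {x : ℕ × ℕ × ℕ} : ¬ Bef T x x :=
  fun h => bef_asymm h h

theorem count_drop {R C : ℕ} {T : ℕ → ℕ → Finset ℕ} (hT : GoodT R C T) (k v : ℕ) :
    ((readWord R C T).drop k).count v = (colset v ((wordLab R C T).drop k)).card := by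
  rw [← wordLab_fst, ← List.map_drop]
  have hsub : ∀ x, x ∈ (wordLab R C T).drop k → x ∈ wordLab R C T := fun x hx => List.mem_of_mem_drop hx
  have hnd : ((wordLab R C T).drop k).Nodup := by
    have h1 : (wordLab R C T).Nodup := by
      refine (bef_pairwise R C T).imp ?_
      rintro a b h rfl
      exact bef_irrefl h
    exact h1.sublist (List.drop_sublist _ _)
  unfold colset
  rw [List.toFinset_card_of_nodup, List.length_map, List.count, List.countP_map,
    List.countP_eq_length_filter]
  · rfl
  · apply List.Nodup.map_on
    · rintro ⟨a, b, c⟩ hx ⟨a', b', c'⟩ hy he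
      simp only [List.mem_filter, beq_iff_eq] at hx hy he
      obtain ⟨hx, rfl⟩ := hx
      obtain ⟨hy, rfl⟩ := hy
      subst he
      rw [row_unique hT (hsub _ hx) (hsub _ hy)]
    · exact hnd.filter _

theorem mem_drop_of {R C : ℕ} {T : ℕ → ℕ → Finset ℕ} {k : ℕ} {x y : ℕ × ℕ × ℕ}
    (hx : x ∈ (wordLab R C T).drop k) (hy : y ∈ wordLab R C T) (h : ¬ Bef T y x) :
    y ∈ (wordLab R C T).drop k := by
  have hp := bef_pairwise R C T
  rw [← List.take_append_drop k (wordLab R C T)] at hp hy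
  rw [List.pairwise_append] at hp
  rcases List.mem_append.1 hy with hy | hy
  · exact absurd (hp.2.2 y hy x hx) h
  · exact hy

theorem exists_cut {R C : ℕ} {T : ℕ → ℕ → Finset ℕ} {x : ℕ × ℕ × ℕ} (hx : x ∈ wordLab R C T) :
    ∃ k, x ∈ (wordLab R C T).drop k ∧ ∀ y ∈ (wordLab R C T).drop k, y = x ∨ Bef T x y := by
  obtain ⟨s, t, h⟩ := List.mem_iff_append.1 hx
  have hp := bef_pairwise R C T
  refine ⟨s.length, ?_⟩
  rw [h] at hp ⊢
  rw [List.pairwise_append, List.pairwise_cons] at hp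
  simp only [List.drop_left]
  refine ⟨List.mem_cons_self, fun y hy => ?_⟩
  rcases List.mem_cons.1 hy with e | hy
  · exact Or.inl e
  · exact Or.inr (hp.2.1.1 y hy)

theorem fact1 {R C i : ℕ} {T : ℕ → ℕ → Finset ℕ} (hT : GoodT R C T) {p r v r' j : ℕ}
    (hx : (i + 1, r, p) ∈ wordLab R C T) (hj : p < j) (hv : v = i ∨ v = i + 1)
    (hy : (v, r', j) ∈ wordLab R C T) : ¬ Bef T (v, r', j) (i + 1, r, p) := by
  have hxm := ((mem_wordLab hT).1 hx).1
  have hym := ((mem_wordLab hT).1 hy).1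
  rintro (h | ⟨h1, h⟩)
  · dsimp only at h
    obtain ⟨z, hz⟩ := hT.conv (s := r) (k := j) le_rfl h.le hj.le le_rfl ⟨_, hxm⟩ ⟨_, hym⟩
    have h1 := hT.mono le_rfl hj.le (Or.inr hj) hxm hz
    have h2 := hT.mono h.le le_rfl (Or.inl h) hz hym
    have : z = v := by omega
    subst this
    have := not_above hT hy hz
    omega
  · dsimp only at h1
    subst h1
    have hp : Piv T (v, r', j) := by
      intro u hu
      have := hT.mono le_rfl hj.le (Or.inr hj) hxm hu
      dsimp only
      omega
    simp only [hp, not_true, false_and, false_or, true_and] at h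
    omega

theorem fact2 {R C i : ℕ} {T : ℕ → ℕ → Finset ℕ} (hT : GoodT R C T) {p r r' j : ℕ}
    (hx : (i + 1, r, p) ∈ wordLab R C T) (hj : j < p) (hpure : ∀ s, i ∉ T s p)
    (hy : (i, r', j) ∈ wordLab R C T) : ¬ Bef T (i + 1, r, p) (i, r', j) := by
  have hxm := ((mem_wordLab hT).1 hx).1
  have hym := ((mem_wordLab hT).1 hy).1
  rintro (h | ⟨h1, h⟩)
  · dsimp only at h
    obtain ⟨z, hz⟩ := hT.conv (s := r') (k := p) le_rfl h.le hj.le le_rfl ⟨_, hym⟩ ⟨_, hxm⟩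
    have h1 := hT.mono le_rfl hj.le (Or.inr hj) hym hz
    have h2 := hT.mono h.le le_rfl (Or.inl h) hz hxm
    have h3 : z ≠ i := by rintro rfl; exact hpure _ hz
    have : z = i + 1 := by omega
    subst this
    have := not_above hT hx hz
    omega
  · dsimp only at h1
    subst h1
    have hp : Piv T (i + 1, r, p) := by
      intro u hu
      have := hT.mono le_rfl hj.le (Or.inr hj) hym hu
      have h3 : u ≠ i := by rintro rfl; exact hpure _ hu
      dsimp only
      omega
    simp only [hp, not_true, false_and, false_or, true_and] at h
    omega

theorem fact3 {R C i : ℕ} {T : ℕ → ℕ → Finset ℕ} (hT : GoodT R C T) {r r' j : ℕ}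
    (hx : (i + 1, r, j) ∈ wordLab R C T)
    (hy : (i, r', j) ∈ wordLab R C T) : ¬ Bef T (i, r', j) (i + 1, r, j) := by
  have hxm := ((mem_wordLab hT).1 hx).1
  have hym := ((mem_wordLab hT).1 hy).1
  rintro (h | ⟨h1, h⟩)
  · dsimp only at h
    have := hT.mono h.le le_rfl (Or.inl h) hxm hym
    omega
  · dsimp only at h1
    subst h1
    rcases h with h | h | h
    · have := h.2 i hym
      dsimp only at this
      omega
    · have h2 := h.2.2
      dsimp only at h2
      omega
    · have h2 := h.2.2
      dsimp only at h2
      omega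

/-! main comparison -/

theorem fin_pure {R C : ℕ} {T : ℕ → ℕ → Finset ℕ} (hT : GoodT R C T) {Q : ℕ → Prop} (x : ℕ)
    (h : ∀ j, Q j → ∃ r, x ∈ T r j) : {j | Q j}.Finite := by
  apply (Set.finite_lt_nat C).subset
  intro j hj
  obtain ⟨r, hr⟩ := h j hj
  exact (hT.bnd ⟨_, hr⟩).2

theorem lattice_no_minus {R C i : ℕ} {T : ℕ → ℕ → Finset ℕ} (hT : GoodT R C T)
    (hlat : ∀ k, ((readWord R C T).drop k).count (i + 1) ≤ ((readWord R C T).drop k).count i) :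
    ¬ ∃ A, LeftmostUnpairedMinus i T A := by
  rintro ⟨A, hB, -, hgt⟩
  have h0 : 0 < fsuffix i T A := by
    have := hgt (A + C + 1) (by omega)
    have e : fsuffix i T (A + C + 1) = 0 := by
      unfold fsuffix
      have e1 : {j : ℕ | A + C + 1 ≤ j ∧ ColPureB i (restrictTwo i T) j} = ∅ := by
        ext j
        simp only [Set.mem_setOf_eq, Set.mem_empty_iff_false, iff_false]
        rintro ⟨h1, h2, -⟩
        obtain ⟨r, hr⟩ := colHas_restrict_b.1 h2
        have := (hT.bnd ⟨_, hr⟩).2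
        omega
      have e2 : {j : ℕ | A + C + 1 ≤ j ∧ ColPureA i (restrictTwo i T) j} = ∅ := by
        ext j
        simp only [Set.mem_setOf_eq, Set.mem_empty_iff_false, iff_false]
        rintro ⟨h1, h2, -⟩
        obtain ⟨r, hr⟩ := colHas_restrict_a.1 h2
        have := (hT.bnd ⟨_, hr⟩).2
        omega
      rw [e1, e2]; simp
    omega
  have hpure : ∀ s, i ∉ T s A := fun s hs => hB.2 (colHas_restrict_a.2 ⟨s, hs⟩)
  obtain ⟨r, hr⟩ := exists_top hT (colHas_restrict_b.1 hB.1)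
  obtain ⟨k, hk1, hk2⟩ := exists_cut hr
  have hl := hlat k
  rw [count_drop hT, count_drop hT] at hl
  set D := (wordLab R C T).drop k with hD
  set β := colset (i + 1) D
  set α := colset i D
  -- pure sets
  have hb : ∀ j, A ≤ j → (∃ s, i + 1 ∈ T s j) → j ∈ β := by
    intro j hj hs
    obtain ⟨s, hs⟩ := exists_top hT hs
    refine mem_colset.2 ⟨s, ?_⟩
    rcases hj.eq_or_lt with rfl | hj
    · rw [← row_unique hT hr hs]; exact hk1
    · exact mem_drop_of hk1 hs (fact1 hT hr hj (Or.inr rfl) hs)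
  have ha : ∀ j, j ∈ α → A ≤ j ∧ ∃ s, i ∈ T s j := by
    intro j hj
    obtain ⟨s, hs⟩ := mem_colset.1 hj
    have hs' := List.mem_of_mem_drop hs
    have hm := ((mem_wordLab hT).1 hs').1
    refine ⟨?_, s, hm⟩
    by_contra hc
    rcases hk2 _ hs with e | e
    · simp at e
    · exact fact2 hT hr (by omega) hpure hs' e
  set M : Set ℕ := {j | A ≤ j ∧ ColMixed i (restrictTwo i T) j}
  set PB : Set ℕ := {j | A ≤ j ∧ ColPureB i (restrictTwo i T) j} with hPB
  set PA : Set ℕ := {j | A ≤ j ∧ ColPureA i (restrictTwo i T) j} with hPA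
  have fM : M.Finite := fin_pure hT i (fun j h => colHas_restrict_a.1 h.2.1)
  have fB : PB.Finite := fin_pure hT (i + 1) (fun j h => colHas_restrict_b.1 h.2.1)
  have fA : PA.Finite := fin_pure hT i (fun j h => colHas_restrict_a.1 h.2.1)
  have c1 : PB.ncard + M.ncard ≤ β.card := by
    rw [← Set.ncard_union_eq _ fB fM, ← Set.ncard_coe_finset]
    · apply Set.ncard_le_ncard _ (Finset.finite_toSet _)
      rintro j (h | h)
      · exact hb j h.1 (colHas_restrict_b.1 h.2.1)
      · exact hb j h.1 (colHas_restrict_b.1 h.2.2)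
    · rw [Set.disjoint_left]
      intro j h h'
      exact h.2.2 h'.2.1
  have c2 : α.card ≤ PA.ncard + M.ncard := by
    rw [← Set.ncard_coe_finset]
    refine le_trans ?_ (Set.ncard_union_le PA M)
    apply Set.ncard_le_ncard _ (fA.union fM)
    intro j hj
    obtain ⟨h1, h2⟩ := ha j hj
    by_cases h3 : ColHas (restrictTwo i T) j (i + 1)
    · exact Or.inr ⟨h1, colHas_restrict_a.2 h2, h3⟩
    · exact Or.inl ⟨h1, colHas_restrict_a.2 h2, h3⟩
  have : fsuffix i T A = (PB.ncard : ℤ) - PA.ncard := rfl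
  omega

theorem exists_minus {R C i : ℕ} {T : ℕ → ℕ → Finset ℕ} (hT : GoodT R C T) (p : ℕ)
    (hp : 0 < fsuffix i T p) : ∃ A, LeftmostUnpairedMinus i T A := by
  have fB : ∀ p, {j | p ≤ j ∧ ColPureB i (restrictTwo i T) j}.Finite := fun p =>
    fin_pure hT (i + 1) (fun j h => colHas_restrict_b.1 h.2.1)
  have fA : ∀ p, {j | p ≤ j ∧ ColPureA i (restrictTwo i T) j}.Finite := fun p =>
    fin_pure hT i (fun j h => colHas_restrict_a.1 h.2.1)
  have hz : ∀ p, C ≤ p → fsuffix i T p ≤ 0 := by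
    intro p hp
    unfold fsuffix
    have e1 : {j : ℕ | p ≤ j ∧ ColPureB i (restrictTwo i T) j} = ∅ := by
      ext j
      simp only [Set.mem_setOf_eq, Set.mem_empty_iff_false, iff_false]
      rintro ⟨h1, h2, -⟩
      obtain ⟨r, hr⟩ := colHas_restrict_b.1 h2
      have := (hT.bnd ⟨_, hr⟩).2
      omega
    rw [e1]
    simp
  obtain ⟨A, hA, hmax⟩ := Finset.exists_max_image (Finset.range (p + C + 1))
    (fun q => toLex (fsuffix i T q, q)) ⟨0, by simp⟩
  have key : ∀ q, fsuffix i T q < fsuffix i T A ∨ (fsuffix i T q = fsuffix i T A ∧ q ≤ A) ∨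
      p + C < q := by
    intro q
    by_cases h : q ≤ p + C
    · have := hmax q (by simp; omega)
      rw [Prod.Lex.toLex_le_toLex] at this
      tauto
    · right; right; omega
  have hpA : fsuffix i T p ≤ fsuffix i T A := by
    rcases key p with h | h | h
    · exact h.le
    · exact h.1.le
    · omega
  have hgt : ∀ q, A < q → fsuffix i T q < fsuffix i T A := by
    intro q hq
    rcases key q with h | h | h
    · exact h
    · omega
    · have := hz q (by omega)
      omega
  refine ⟨A, ?_, ?_, hgt⟩
  · by_contra hc
    have h1 := hgt (A + 1) (by omega)
    have h2 : fsuffix i T A ≤ fsuffix i T (A + 1) := by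
      unfold fsuffix
      have e1 : {j : ℕ | A ≤ j ∧ ColPureB i (restrictTwo i T) j}.ncard ≤
          {j : ℕ | A + 1 ≤ j ∧ ColPureB i (restrictTwo i T) j}.ncard := by
        apply Set.ncard_le_ncard _ (fB _)
        rintro j ⟨q1, q2⟩
        refine ⟨?_, q2⟩
        rcases q1.eq_or_lt with rfl | q1
        · exact absurd q2 hc
        · exact q1
      have e2 : {j : ℕ | A + 1 ≤ j ∧ ColPureA i (restrictTwo i T) j}.ncard ≤
          {j : ℕ | A ≤ j ∧ ColPureA i (restrictTwo i T) j}.ncard := by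
        apply Set.ncard_le_ncard _ (fA _)
        rintro j ⟨q1, q2⟩
        exact ⟨by omega, q2⟩
      omega
    omega
  · intro q
    rcases key q with h | h | h
    · exact h.le
    · exact h.1.le
    · have := hz q (by omega)
      omega

theorem no_minus_lattice {R C i : ℕ} {T : ℕ → ℕ → Finset ℕ} (hT : GoodT R C T)
    (hno : ¬ ∃ A, LeftmostUnpairedMinus i T A) (k : ℕ) :
    ((readWord R C T).drop k).count (i + 1) ≤ ((readWord R C T).drop k).count i := by
  by_contra hlt
  rw [count_drop hT, count_drop hT] at hlt
  apply hno
  set D := (wordLab R C T).drop k with hD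
  set β := colset (i + 1) D with hβ
  set α := colset i D with hα
  have hmix : ∀ j ∈ β, (∃ r, i ∈ T r j) → j ∈ α := by
    intro j hj h
    obtain ⟨r, hr⟩ := mem_colset.1 hj
    obtain ⟨s, hs⟩ := exists_top hT h
    exact mem_colset.2 ⟨s, mem_drop_of hr hs (fact3 hT (List.mem_of_mem_drop hr) hs)⟩
  have hbT : ∀ j ∈ β, ∃ r, i + 1 ∈ T r j := by
    intro j hj
    obtain ⟨r, hr⟩ := mem_colset.1 hj
    exact ⟨r, ((mem_wordLab hT).1 (List.mem_of_mem_drop hr)).1⟩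
  have hex : ∃ p, p ∈ β ∧ ¬ ∃ r, i ∈ T r p := by
    by_contra hc
    push Not at hc
    exact hlt (Finset.card_le_card fun j hj => hmix j hj (hc j hj))
  set p := Nat.find hex
  obtain ⟨hp1, hp2⟩ := Nat.find_spec hex
  have hpmin : ∀ j, j ∈ β → (¬ ∃ r, i ∈ T r j) → p ≤ j := fun j h1 h2 => Nat.find_min' hex ⟨h1, h2⟩
  apply exists_minus hT p
  set PB : Set ℕ := {j | p ≤ j ∧ ColPureB i (restrictTwo i T) j} with hPB
  set PA : Set ℕ := {j | p ≤ j ∧ ColPureA i (restrictTwo i T) j} with hPA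
  have fB : PB.Finite := fin_pure hT (i + 1) (fun j h => colHas_restrict_b.1 h.2.1)
  obtain ⟨r, hr⟩ := mem_colset.1 hp1
  have hr' := List.mem_of_mem_drop hr
  have hsub : PA ⊆ ↑(α \ β) := by
    rintro j ⟨h1, h2, h3⟩
    rw [colHas_restrict_a] at h2
    rw [colHas_restrict_b] at h3
    obtain ⟨s, hs⟩ := exists_top hT h2
    have hne : p ≠ j := fun e => hp2 (by rw [← e] at h2; exact h2)
    rw [Finset.mem_coe, Finset.mem_sdiff]
    refine ⟨mem_colset.2 ⟨s, mem_drop_of hr hs (fact1 hT hr' (by omega) (Or.inl rfl) hs)⟩, ?_⟩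
    intro hb
    exact h3 (hbT j hb)
  have hsub2 : (↑(β \ α) : Set ℕ) ⊆ PB := by
    intro j hj
    rw [Finset.mem_coe, Finset.mem_sdiff] at hj
    have hn : ¬ ∃ r, i ∈ T r j := fun h => hj.2 (hmix j hj.1 h)
    exact ⟨hpmin j hj.1 hn, colHas_restrict_b.2 (hbT j hj.1), fun h => hn (colHas_restrict_a.1 h)⟩
  have c1 : PA.ncard ≤ (α \ β).card := by
    rw [← Set.ncard_coe_finset]
    exact Set.ncard_le_ncard hsub (Finset.finite_toSet _)
  have c2 : (β \ α).card ≤ PB.ncard := by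
    rw [← Set.ncard_coe_finset]
    exact Set.ncard_le_ncard hsub2 fB
  have d1 := Finset.card_sdiff_add_card_inter α β
  have d2 := Finset.card_sdiff_add_card_inter β α
  rw [Finset.inter_comm] at d2
  have : fsuffix i T p = (PB.ncard : ℤ) - PA.ncard := rfl
  omega

/-- `T ∈ SVRPP^n(lam/mu)` is a highest weight element (`e_i(T) = 0` for
all `i ∈ {1,…,n−1}`) if and only if its reading word is a reverse lattice word. -/
theorem highest_weight_iff_reverse_lattice (lam mu : ℕ → ℕ)
    (hlam : IsPartitionFun lam) (hmu : IsPartitionFun mu) (hsub : ∀ r, mu r ≤ lam r)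
    (R C : ℕ) (hR : ∀ r, R ≤ r → lam r = 0) (hC : ∀ r, lam r ≤ C)
    (n : ℕ) (hn : 1 ≤ n)
    (T : ℕ → ℕ → Finset ℕ) (hT : IsSVRPPn lam mu n T) :
    (∀ i, 1 ≤ i → i < n → eOp i T = none) ↔
      IsReverseLatticeWord (readWord R C T) := by
  have hG : GoodT R C T := goodT_of lam mu hlam hmu R C hR hC T hT.1
  have hiff : ∀ i, eOp i T = none ↔
      ∀ k, ((readWord R C T).drop k).count (i + 1) ≤ ((readWord R C T).drop k).count i := by
    intro i
    rw [eOp_none_iff hG]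
    exact ⟨no_minus_lattice hG, lattice_no_minus hG⟩
  have hbig : ∀ v, n < v → ∀ k, ((readWord R C T).drop k).count v = 0 := by
    intro v hv k
    rw [count_drop hG, Finset.card_eq_zero, Finset.eq_empty_iff_forall_notMem]
    intro j hj
    obtain ⟨r, hr⟩ := mem_colset.1 hj
    have := hT.2 r j ((mem_wordLab hG).1 (List.mem_of_mem_drop hr)).1
    rw [Finset.mem_Icc] at this
    omega
  constructor
  · intro h k a b ha hab
    have step : ∀ i, 1 ≤ i →
        ((readWord R C T).drop k).count (i + 1) ≤ ((readWord R C T).drop k).count i := by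
      intro i hi
      by_cases hin : i < n
      · exact (hiff i).1 (h i hi hin) k
      · rw [hbig (i + 1) (by omega) k]
        exact Nat.zero_le _
    induction b, hab using Nat.le_induction with
    | base => exact step a ha
    | succ m hm ih => exact (step m (by omega)).trans ih
  · intro h i hi _
    rw [hiff]
    intro k
    exact h k i (i + 1) hi (by omega)
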